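/- Let C : Ω → ℝ^d be a claim and assume in addition that the value of the utility maximization problem strictly improves with initial capital in the sense that for every z ∈ ℝ^d and every ε ∈ ℝ^d with all coordinates strictly positive, V(z + ε, C) ≠ V(z, C). Then the intersection P^b(C) ∩ P^s(C) has empty interior in ℝ^d. -/

import Mathlib

open Pointwise

/-
If a buy price `p` exceeded a sell price `p'`, then averaging a hedge of `C` bought at `p` with a
hedge of `-C` sold at `p'` would preserve the value `V(x₀, 0)` at the smaller endowment `x₀ - δ`,
`δ = (p - p') / 2`. A concave function of one real variable that does not increase over one step
does not increase afterwards; for the concave set-valued map `V(·, 0)` this says that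
`V(x₀ + t δ, 0) ⊆ V(x₀, 0)` for all `t ≥ 0`. As `C` is dominated by a deterministic portfolio,
`V(·, C)` is squeezed between such sets and is constant for large endowments, so it does not
strictly improve with capital. An interior point of `P^b(C) ∩ P^s(C)` yields such `p` and `p'`.
-/

/-- A set-valued map is concave if its graph is convex, i.e. if
`a S(x) + b S(y) ⊆ S(a x + b y)` for convex weights `a`, `b`. Both the attainable payoffs and the
value of the utility maximization problem are of this kind. -/
def IsConcaveCorrespondence {E F : Type*} [AddCommGroup E] [Module ℝ E] [AddCommGroup F]
    [Module ℝ F] (S : E → Set F) : Prop :=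
  ∀ ⦃x y : E⦄ ⦃v w : F⦄ ⦃a b : ℝ⦄, v ∈ S x → w ∈ S y → 0 ≤ a → 0 ≤ b → a + b = 1 →
    a • v + b • w ∈ S (a • x + b • y)

theorem mem_of_isClosed_of_forall_combo_mem {F : Type*} [AddCommGroup F] [Module ℝ F]
    [TopologicalSpace F] [ContinuousAdd F] [ContinuousSMul ℝ F] {K : Set F} (hK : IsClosed K)
    (hne : K.Nonempty) {v : F} {a b : ℝ} (ha : 0 < a) (hb : 0 ≤ b) (hab : a + b = 1)
    (h : ∀ w ∈ K, a • v + b • w ∈ K) : v ∈ K := by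
  obtain ⟨w, hw⟩ := hne
  have iterate_mem (n : ℕ) : v + b ^ n • (w - v) ∈ K := by
    induction n with
    | zero => simpa using hw
    | succ n ih =>
      obtain rfl : a = 1 - b := by linarith
      convert h _ ih using 1
      rw [pow_succ]
      module
  have tendsto_iterate :
      Filter.Tendsto (fun n : ℕ => v + b ^ n • (w - v)) Filter.atTop (nhds v) := by
    simpa using ((tendsto_pow_atTop_nhds_zero_of_lt_one hb (by linarith)).smul_const
      (w - v)).const_add v
  exact hK.mem_of_tendsto tendsto_iterate (.of_forall iterate_mem)

namespace IsConcaveCorrespondence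

variable {E F : Type*} [AddCommGroup E] [Module ℝ E] [AddCommGroup F] [Module ℝ F]
  {S : E → Set F}

theorem of_smul_add_smul_subset
    (h : ∀ (x y : E) (a : ℝ), 0 ≤ a → a ≤ 1 →
      a • S x + (1 - a) • S y ⊆ S (a • x + (1 - a) • y)) : IsConcaveCorrespondence S := by
  intro x y v w a b hv hw ha hb hab
  obtain rfl : b = 1 - a := by linarith
  exact h x y a ha (by linarith)
    (Set.add_mem_add (Set.smul_mem_smul_set hv) (Set.smul_mem_smul_set hw))

theorem inter_subset (hS : IsConcaveCorrespondence S) (x y : E) {a b : ℝ} (ha : 0 ≤ a)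
    (hb : 0 ≤ b) (hab : a + b = 1) : S x ∩ S y ⊆ S (a • x + b • y) := by
  rintro v ⟨hx, hy⟩
  simpa only [← add_smul, hab, one_smul] using hS hx hy ha hb hab

theorem add_smul_subset_of_subset_sub [TopologicalSpace F] [ContinuousAdd F]
    [ContinuousSMul ℝ F] (hS : IsConcaveCorrespondence S) {x δ : E} (hclosed : IsClosed (S x))
    (hne : (S x).Nonempty) (hx : S x ⊆ S (x - δ)) {t : ℝ} (ht : 0 ≤ t) :
    S (x + t • δ) ⊆ S x := by
  intro v hv
  have hab : 1 / (1 + t) + t / (1 + t) = 1 := by field_simp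
  have hweights : (1 / (1 + t)) • (x + t • δ) + (t / (1 + t)) • (x - δ) = x :=
    calc (1 / (1 + t)) • (x + t • δ) + (t / (1 + t)) • (x - δ)
        = (1 / (1 + t) + t / (1 + t)) • x := by module
      _ = x := by rw [hab, one_smul]
  refine mem_of_isClosed_of_forall_combo_mem hclosed hne (by positivity) (by positivity) hab
    fun w hw => ?_
  simpa only [hweights] using hS hv (hx hw) (by positivity) (by positivity) hab

end IsConcaveCorrespondence

section ValueSet

variable {E X F : Type*} [AddCommGroup X] [PartialOrder F] [TopologicalSpace F]

/-- The value `V(x, C)` of the utility maximization problem with endowment `x` and claim `C`, where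
`A x` is the set of payoffs attainable from `x` and `U` is a vector-valued utility: the closed lower
set generated by the utilities `U (W + C)` of attainable payoffs `W`. -/
def valueSet (A : E → Set X) (U : X → F) (x : E) (C : X) : Set F :=
  closure {v | ∃ W ∈ A x, v ≤ U (W + C)}

variable {A : E → Set X} {U : X → F}

theorem valueSet_nonempty_iff {x : E} {C : X} :
    (valueSet A U x C).Nonempty ↔ (A x).Nonempty := by
  rw [valueSet, closure_nonempty_iff]
  exact ⟨fun ⟨_, W, hW, _⟩ => ⟨W, hW⟩, fun ⟨W, hW⟩ => ⟨_, W, hW, le_rfl⟩⟩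

variable [AddCommGroup E]

/-- Additional capital `c` can be held to the end: it adds the deterministic payoff `ι c`, where `ι`
embeds portfolios into payoffs (as constant random vectors, in the case of `X = Ω → E`). -/
def IsTranslative (ι : E → X) (A : E → Set X) : Prop :=
  ∀ (x : E) (W : X), W ∈ A x → ∀ c : E, W + ι c ∈ A (x + c)

theorem valueSet_subset_add_of_le [PartialOrder X] [IsOrderedAddMonoid X] {ι : E → X}
    (hU : Monotone U) (htrans : IsTranslative ι A) (x : E) {c : E} {C D : X}
    (h : C ≤ ι c + D) : valueSet A U x C ⊆ valueSet A U (x + c) D := by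
  refine closure_mono ?_
  rintro v ⟨W, hW, hv⟩
  refine ⟨W + ι c, htrans x W hW c, hv.trans (hU ?_)⟩
  simpa only [add_assoc] using add_le_add_right h W

theorem isConcaveCorrespondence_valueSet [Module ℝ E] [Module ℝ X] [AddCommGroup F]
    [IsOrderedAddMonoid F] [Module ℝ F] [PosSMulMono ℝ F] [ContinuousAdd F] [ContinuousSMul ℝ F]
    (hA : IsConcaveCorrespondence A) (hU : ConcaveOn ℝ Set.univ U) :
    IsConcaveCorrespondence fun z : E × X => valueSet A U z.1 z.2 := by
  rintro ⟨x, C⟩ ⟨y, D⟩ v w a b hv hw ha hb hab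
  refine map_mem_closure₂ (f := fun v w => a • v + b • w) (by fun_prop) hv hw ?_
  rintro v ⟨W, hW, hv⟩ w ⟨Z, hZ, hw⟩
  refine ⟨a • W + b • Z, hA hW hZ ha hb hab, ?_⟩
  calc a • v + b • w
      ≤ a • U (W + C) + b • U (Z + D) := by gcongr
    _ ≤ U (a • (W + C) + b • (Z + D)) := hU.2 trivial trivial ha hb hab
    _ = U (a • W + b • Z + (a • C + b • D)) := by congr 1; module

/-- The set-valued buy price `P^b(C)`: portfolios that can be paid for `C` out of `x₀` without
loss of value. -/
def buyPrices (A : E → Set X) (U : X → F) (x₀ : E) (C : X) : Set E :=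
  {p | valueSet A U x₀ 0 ⊆ valueSet A U (x₀ - p) C}

/-- The set-valued sell price `P^s(C)`: portfolios that compensate, on top of `x₀`, for the
liability `-C`. -/
def sellPrices (A : E → Set X) (U : X → F) (x₀ : E) (C : X) : Set E :=
  {p | valueSet A U x₀ 0 ⊆ valueSet A U (x₀ + p) (-C)}

end ValueSet

section Prices

variable {E X F : Type*} [AddCommGroup E] [Module ℝ E] [AddCommGroup X] [Module ℝ X]
  [AddCommGroup F] [PartialOrder F] [IsOrderedAddMonoid F] [Module ℝ F] [PosSMulMono ℝ F]
  [TopologicalSpace F] [ContinuousAdd F] [ContinuousSMul ℝ F]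
  {A : E → Set X} {U : X → F}

theorem valueSet_subset_sub_half_smul_sub (hA : IsConcaveCorrespondence A)
    (hU : ConcaveOn ℝ Set.univ U) {x₀ p p' : E} {C : X} (hp : p ∈ buyPrices A U x₀ C)
    (hp' : p' ∈ sellPrices A U x₀ C) :
    valueSet A U x₀ 0 ⊆ valueSet A U (x₀ - (1 / 2 : ℝ) • (p - p')) 0 := by
  have haverage : (1 / 2 : ℝ) • (x₀ - p, C) + (1 / 2 : ℝ) • (x₀ + p', -C)
      = (x₀ - (1 / 2 : ℝ) • (p - p'), 0) := by
    ext1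
    · simp only [Prod.fst_add, Prod.smul_fst]
      module
    · simp
  calc valueSet A U x₀ 0
      ⊆ valueSet A U (x₀ - p) C ∩ valueSet A U (x₀ + p') (-C) := Set.subset_inter hp hp'
    _ ⊆ valueSet A U (x₀ - (1 / 2 : ℝ) • (p - p')) 0 := by
      simpa only [haverage] using (isConcaveCorrespondence_valueSet hA hU).inter_subset
        (x₀ - p, C) (x₀ + p', -C) one_half_pos.le one_half_pos.le (add_halves 1)

theorem valueSet_add_smul_subset_of_subset_sub (hA : IsConcaveCorrespondence A)
    (hU : ConcaveOn ℝ Set.univ U) {ι : E → X} (htrans : IsTranslative ι A) {x δ : E} {C : X}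
    (hx : valueSet A U x C ⊆ valueSet A U (x - δ) C) {t : ℝ} (ht : 0 ≤ t) :
    valueSet A U (x + t • δ) C ⊆ valueSet A U x C := by
  rcases (valueSet A U (x + t • δ) C).eq_empty_or_nonempty with hempty | hne
  · exact hempty ▸ Set.empty_subset _
  have hne' : (valueSet A U x C).Nonempty := by
    obtain ⟨W, hW⟩ := valueSet_nonempty_iff.1 hne
    exact valueSet_nonempty_iff.2
      ⟨W + ι (-(t • δ)), by simpa only [add_neg_cancel_right] using htrans _ W hW (-(t • δ))⟩
  simpa using (isConcaveCorrespondence_valueSet hA hU).add_smul_subset_of_subset_sub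
    (x := (x, C)) (δ := (δ, 0)) isClosed_closure hne' (by simpa using hx) ht

variable [PartialOrder X] [IsOrderedAddMonoid X] {ι : E →ₗ[ℝ] X}

theorem valueSet_add_eq_of_subset_sub (hA : IsConcaveCorrespondence A)
    (hU : ConcaveOn ℝ Set.univ U) (hUmono : Monotone U) (htrans : IsTranslative ι A)
    {x e : E} {C : X} {η t : ℝ} (hη : 0 < η) (ht : 0 ≤ t) (he : 0 ≤ ι e)
    (hC : C ≤ t • ι e) (hC' : -C ≤ t • ι e)
    (hx : valueSet A U x 0 ⊆ valueSet A U (x - η • e) 0) :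
    valueSet A U (x + t • e + e) C = valueSet A U (x + t • e) C := by
  refine Set.Subset.antisymm ?_ (valueSet_subset_add_of_le hUmono htrans _ (by simpa using he))
  calc valueSet A U (x + t • e + e) C
      ⊆ valueSet A U (x + t • e + e + t • e) 0 :=
        valueSet_subset_add_of_le hUmono htrans _ (by simpa using hC)
    _ = valueSet A U (x + ((2 * t + 1) / η) • η • e) 0 := by
        rw [smul_smul, div_mul_cancel₀ _ hη.ne']
        congr 1
        module
    _ ⊆ valueSet A U x 0 :=
        valueSet_add_smul_subset_of_subset_sub hA hU htrans hx (by positivity)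
    _ ⊆ valueSet A U (x + t • e) C :=
        valueSet_subset_add_of_le hUmono htrans _
          (by simpa [neg_le_iff_add_nonneg] using hC')

theorem sub_smul_notMem_sellPrices (hA : IsConcaveCorrespondence A)
    (hU : ConcaveOn ℝ Set.univ U) (hUmono : Monotone U) (htrans : IsTranslative ι A)
    {x₀ e p : E} {C : X} {η t : ℝ} (hη : 0 < η) (ht : 0 ≤ t) (he : 0 ≤ ι e)
    (hC : C ≤ t • ι e) (hC' : -C ≤ t • ι e)
    (hstrict : ∀ z, valueSet A U (z + e) C ≠ valueSet A U z C)
    (hp : p ∈ buyPrices A U x₀ C) : p - η • e ∉ sellPrices A U x₀ C := by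
  intro hp'
  have hx : valueSet A U x₀ 0 ⊆ valueSet A U (x₀ - (η / 2) • e) 0 := by
    convert valueSet_subset_sub_half_smul_sub hA hU hp hp' using 2
    module
  exact hstrict _
    (valueSet_add_eq_of_subset_sub hA hU hUmono htrans (half_pos hη) ht he hC hC' hx)

theorem stmt11_general [TopologicalSpace E] [ContinuousSub E] [ContinuousSMul ℝ E]
    (hA : IsConcaveCorrespondence A) (hU : ConcaveOn ℝ Set.univ U) (hUmono : Monotone U)
    (htrans : IsTranslative ι A) (x₀ : E) {e : E} {C : X} {t : ℝ} (ht : 0 ≤ t) (he : 0 ≤ ι e)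
    (hC : C ≤ t • ι e) (hC' : -C ≤ t • ι e)
    (hstrict : ∀ z, valueSet A U (z + e) C ≠ valueSet A U z C) :
    interior (buyPrices A U x₀ C ∩ sellPrices A U x₀ C) = ∅ := by
  refine Set.eq_empty_iff_forall_notMem.2 fun p hp => ?_
  have hlim : Filter.Tendsto (fun η : ℝ => p - η • e) (nhdsWithin 0 (Set.Ioi 0)) (nhds p) := by
    have : Continuous fun η : ℝ => p - η • e := by fun_prop
    simpa using (this.tendsto 0).mono_left nhdsWithin_le_nhds
  obtain ⟨η, hmem, hη⟩ :=
    ((hlim.eventually (mem_interior_iff_mem_nhds.1 hp)).and self_mem_nhdsWithin).exists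
  exact sub_smul_notMem_sellPrices hA hU hUmono htrans hη ht he hC hC' hstrict
    (interior_subset hp).1 hmem.2

end Prices

section ExpectedUtility

variable {Ω I J E : Type*} [Fintype Ω]

/-- The vector `(E_{Q^j} u^i(Z))_{(i, j)}` of expected utilities of `Z`, with the measure `Q^j`
given by its point masses `Q j ω`. -/
def expectedUtility (Q : J → Ω → ℝ) (u : I → E → ℝ) (Z : Ω → E) : I × J → ℝ :=
  fun ij => ∑ ω, Q ij.2 ω * u ij.1 (Z ω)

variable {Q : J → Ω → ℝ} {u : I → E → ℝ}

theorem monotone_expectedUtility [Preorder E] (hQ : ∀ j ω, 0 ≤ Q j ω)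
    (hu : ∀ i, Monotone (u i)) : Monotone (expectedUtility Q u) := fun _ _ h ij =>
  Finset.sum_le_sum fun ω _ => mul_le_mul_of_nonneg_left (hu ij.1 (h ω)) (hQ ij.2 ω)

theorem concaveOn_expectedUtility [AddCommGroup E] [Module ℝ E] (hQ : ∀ j ω, 0 ≤ Q j ω)
    (hu : ∀ i, ConcaveOn ℝ Set.univ (u i)) :
    ConcaveOn ℝ Set.univ (expectedUtility Q u) := by
  refine ⟨convex_univ, fun Z _ Z' _ a b ha hb hab ij => ?_⟩
  have hterm (ω : Ω) := ((hu ij.1).smul (hQ ij.2 ω)).2 (Set.mem_univ (Z ω))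
    (Set.mem_univ (Z' ω)) ha hb hab
  simpa only [expectedUtility, Pi.add_apply, Pi.smul_apply, smul_eq_mul, Finset.mul_sum,
    ← Finset.sum_add_distrib] using Finset.sum_le_sum fun ω _ => hterm ω

end ExpectedUtility

theorem abs_le_norm_smul_one {Ω κ : Type*} [Fintype Ω] [Fintype κ] (C : Ω → κ → ℝ) :
    |C| ≤ ‖C‖ • (1 : Ω → κ → ℝ) := fun ω k => by
  simpa using (norm_le_pi_norm (C ω) k).trans (norm_le_pi_norm C ω)

theorem stmt11
    {d r s : ℕ} (hd : 0 < d) (hr : 0 < r) (hs : 0 < s)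
    {Ω : Type} [Fintype Ω] [Nonempty Ω]
    (Q : Fin s → Ω → ℝ)
    (hQ0 : ∀ j ω, 0 ≤ Q j ω) (hQ1 : ∀ j, ∑ ω : Ω, Q j ω = 1)
    (u : Fin r → (Fin d → ℝ) → ℝ)
    (hcont : ∀ i, Continuous (u i))
    (hconc : ∀ i, ConcaveOn ℝ Set.univ (u i))
    (hmono : ∀ i, Monotone (u i))
    (hstrict : ∀ i (x y : Fin d → ℝ), (∀ k, x k < y k) → u i x < u i y)
    (A : (Fin d → ℝ) → Set (Ω → Fin d → ℝ))
    (hAconv : ∀ x, Convex ℝ (A x))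
    (hAcomb : ∀ (x y : Fin d → ℝ) (a : ℝ), 0 ≤ a → a ≤ 1 →
      a • A x + (1 - a) • A y ⊆ A (a • x + (1 - a) • y))
    (hAmono : ∀ x y : Fin d → ℝ, x ≤ y → A x ⊆ A y)
    (hAtr : ∀ (x : Fin d → ℝ) (W : Ω → Fin d → ℝ), W ∈ A x →
      ∀ c : Fin d → ℝ, (fun ω => W ω + c) ∈ A (x + c))
    (x0 : Fin d → ℝ) :
    let U : (Ω → Fin d → ℝ) → (Fin r × Fin s → ℝ) :=
      fun W ij => ∑ ω : Ω, Q ij.2 ω * u ij.1 (W ω)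
    let V : (Fin d → ℝ) → (Ω → Fin d → ℝ) → Set (Fin r × Fin s → ℝ) :=
      fun x C => closure {v | ∃ W ∈ A x, v ≤ U (W + C)}
    let Pb : (Ω → Fin d → ℝ) → Set (Fin d → ℝ) :=
      fun C => {p | V x0 0 ⊆ V (x0 - p) C}
    let Ps : (Ω → Fin d → ℝ) → Set (Fin d → ℝ) :=
      fun C => {p | V x0 0 ⊆ V (x0 + p) (-C)}
    ∀ C : Ω → Fin d → ℝ,
      (∀ (z ε : Fin d → ℝ), (∀ k, 0 < ε k) → V (z + ε) C ≠ V z C) →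
      interior (Pb C ∩ Ps C) = ∅ := by
  intro U V Pb Ps C hne
  obtain ⟨hC, hC'⟩ := abs_le'.1 (abs_le_norm_smul_one C)
  have htrans : IsTranslative (LinearMap.const (R := ℝ) (M₂ := Fin d → ℝ) (ι := Ω)) A := hAtr
  exact stmt11_general (e := 1) (.of_smul_add_smul_subset hAcomb)
    (concaveOn_expectedUtility hQ0 hconc) (monotone_expectedUtility hQ0 hmono) htrans x0
    (norm_nonneg C) zero_le_one hC hC' fun z => hne z 1 fun _ => one_pos
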